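/- Every 𝒦-set E ⊆ 𝕋 is an 𝓛₂-set; that is, if there is c_E > 0 such that every arc I ⊆ 𝕋 satisfies sup_{ζ∈I} dist(ζ,E) ≥ c_E |I|, then there is C > 0 such that ∫_{Γ(ζ,E)} log²(dist(ζ,E)/dist(ζ',E)) |dζ'|/|ζ−ζ'|² ≤ C/dist(ζ,E) for all ζ ∈ 𝕋∖E. -/

import Mathlib

open MeasureTheory Real Set

noncomputable section

/-- The unit circle in `ℂ`. -/
def circleT : Set ℂ := Metric.sphere (0 : ℂ) 1

/-- Arc-length parametrization of the unit circle. -/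
def cpt (θ : ℝ) : ℂ := Complex.exp (θ * Complex.I)

/-- Distance from a point to a set. -/
def dE (E : Set ℂ) (ζ : ℂ) : ℝ := Metric.infDist ζ E

/-- Arc-length integral over the whole circle. -/
def circInt (f : ℂ → ℝ) : ℝ := ∫ θ in Set.Ioc 0 (2 * π), f (cpt θ)

/-- Arc-length integral over a subset `Λ` of the circle. -/
def circIntOn (Λ : Set ℂ) (f : ℂ → ℝ) : ℝ :=
  ∫ θ in {θ ∈ Set.Ioc 0 (2 * π) | cpt θ ∈ Λ}, f (cpt θ)

/-- `E` has arc-length (Lebesgue) measure zero. -/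
def MeasureZeroOnCircle (E : Set ℂ) : Prop :=
  volume {θ ∈ Set.Ioc 0 (2 * π) | cpt θ ∈ E} = 0

/-- `E` is a Carleson set: `∫_𝕋 log dist(ζ,E) |dζ| > -∞`. -/
def CarlesonSet (E : Set ℂ) : Prop :=
  IntegrableOn (fun θ => Real.log (dE E (cpt θ))) (Set.Ioc 0 (2 * π)) volume

/-- `I(ζ,E)`: the connected component of `𝕋 \ E` containing `ζ`. -/
def compArc (E : Set ℂ) (ζ : ℂ) : Set ℂ := connectedComponentIn (circleT \ E) ζ

/-- `Γ(ζ,E)`. -/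
def GammaSet (E : Set ℂ) (ζ : ℂ) : Set ℂ :=
  {ζ' ∈ circleT \ compArc E ζ | dE E ζ' ≤ dE E ζ}

/-- `Σ(ζ,E)`. -/
def SigmaSet (E : Set ℂ) (ζ : ℂ) : Set ℂ :=
  {ζ' ∈ circleT \ compArc E ζ | dE E ζ ≤ dE E ζ'}

/-- The Richter–Sundberg integrand for the outer function with boundary modulus
`ω(dist(·,E))`. -/
def RSker (ω : ℝ → ℝ) (E : Set ℂ) (ζ ζ' : ℂ) : ℝ :=
  ((ω (dE E ζ')) ^ 2 - (ω (dE E ζ)) ^ 2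
    - 2 * (ω (dE E ζ)) ^ 2 * Real.log (ω (dE E ζ') / ω (dE E ζ))) / ‖ζ - ζ'‖ ^ 2

/-- Local Dirichlet integral `D_ζ(f_{ω,E})` (Richter–Sundberg formula). -/
def locDir (ω : ℝ → ℝ) (E : Set ℂ) (ζ : ℂ) : ℝ :=
  (1 / (2 * π)) * circInt (fun ζ' => RSker ω E ζ ζ')

/-- Local Dirichlet integral restricted to `Λ`. -/
def locDirOn (ω : ℝ → ℝ) (E : Set ℂ) (Λ : Set ℂ) (ζ : ℂ) : ℝ :=
  (1 / (2 * π)) * circIntOn Λ (fun ζ' => RSker ω E ζ ζ')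

/-- `E` is an `𝓛₁`-set. -/
def L1Set (E : Set ℂ) : Prop :=
  ∃ C > 0, ∀ ζ ∈ circleT \ E,
    circIntOn (GammaSet E ζ)
      (fun ζ' => Real.log (dE E ζ / dE E ζ') / ‖ζ - ζ'‖ ^ 2) ≤ C / dE E ζ

/-- The `𝓛₂` inequality with constant `C`. -/
def L2With (E : Set ℂ) (C : ℝ) : Prop :=
  ∀ ζ ∈ circleT \ E,
    circIntOn (GammaSet E ζ)
      (fun ζ' => (Real.log (dE E ζ / dE E ζ')) ^ 2 / ‖ζ - ζ'‖ ^ 2) ≤ C / dE E ζ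

/-- `E` is an `𝓛₂`-set. -/
def L2Set (E : Set ℂ) : Prop := ∃ C > 0, L2With E C

/-- Supremum of `dist(·,E)` over the arc `cpt '' (a,b]`. -/
def arcSup (E : Set ℂ) (a b : ℝ) : ℝ := sSup ((fun θ => dE E (cpt θ)) '' Set.Ioc a b)

/-- `E` is a `𝒦`-set (Kotochigov). -/
def KSet (E : Set ℂ) : Prop :=
  ∃ c > 0, ∀ a b : ℝ, a < b → b ≤ a + 2 * π → c * (b - a) ≤ arcSup E a b

/-- Integral of a weight over the arc `cpt '' (a,b]` (with respect to arc length). -/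
def arcInt (w : ℂ → ℝ) (a b : ℝ) : ℝ := ∫ θ in Set.Ioc a b, w (cpt θ)

/-- Double logarithmic integral of a weight over an arc. -/
def arcDouble (w : ℂ → ℝ) (a b : ℝ) : ℝ :=
  ∫ θ in Set.Ioc a b, (∫ θ' in Set.Ioc a b,
    Real.log (1 / ‖cpt θ - cpt θ'‖) * w (cpt θ) * w (cpt θ'))

/-- Arc-length measure of `{ζ ∈ I : dist(ζ,E) ≤ t}` for the arc `cpt '' (a,b]`. -/
def sublevelMeas (E : Set ℂ) (a b t : ℝ) : ℝ :=
  (volume {θ ∈ Set.Ioc a b | dE E (cpt θ) ≤ t}).toReal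

/-- Arc-length measure of `E_t = {ζ ∈ 𝕋 : dist(ζ,E) ≤ t}`. -/
def EtMeas (E : Set ℂ) (t : ℝ) : ℝ := sublevelMeas E 0 (2 * π) t

/-- The open unit disc. -/
def unitDisc : Set ℂ := Metric.ball (0 : ℂ) 1

/-- Membership in the (holomorphic) Dirichlet space `𝒟`. -/
def MemDirichlet (f : ℂ → ℂ) : Prop :=
  DifferentiableOn ℂ f unitDisc ∧
  (∃ M : ℝ, ∀ r ∈ Set.Ioo (0 : ℝ) 1,
    (∫ θ in Set.Ioc 0 (2 * π), ‖f ((r : ℂ) * cpt θ)‖ ^ 2) ≤ M) ∧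
  IntegrableOn (fun z => ‖deriv f z‖ ^ 2) unitDisc volume

/-- `f` is a multiplier of the Dirichlet space `𝒟`. -/
def IsMultiplierD (f : ℂ → ℂ) : Prop :=
  ∀ g : ℂ → ℂ, MemDirichlet g → MemDirichlet (fun z => f z * g z)

/-- The outer function `f_{ω,E}` with boundary modulus `ω(dist(·,E))`. -/
def outerFun (ω : ℝ → ℝ) (E : Set ℂ) (z : ℂ) : ℂ :=
  Complex.exp ((((2 * π)⁻¹ : ℝ) : ℂ) * ∫ θ in Set.Ioc 0 (2 * π),
    ((cpt θ + z) / (cpt θ - z)) * ((Real.log (ω (dE E (cpt θ))) : ℝ) : ℂ))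

/-- `log ω(dist(·,E)) ∈ L¹(𝕋)`. -/
def LogOmegaInt (ω : ℝ → ℝ) (E : Set ℂ) : Prop :=
  IntegrableOn (fun θ => Real.log (ω (dE E (cpt θ)))) (Set.Ioc 0 (2 * π)) volume

/-- Standing hypotheses on `ω` (with derivative `ω'`): continuous, positive, increasing on
`(0,π]`, differentiable with derivative `ω'`, `t ↦ ω(t^γ)` concave, and `t ↦ tω'(t)/ω(t)`
increasing. -/
def OmegaHyp (ω ω' : ℝ → ℝ) (γ : ℝ) : Prop :=
  ContinuousOn ω (Set.Ioc 0 π) ∧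
  (∀ t ∈ Set.Ioc (0 : ℝ) π, 0 < ω t) ∧
  MonotoneOn ω (Set.Ioc 0 π) ∧
  (∀ t ∈ Set.Ioo (0 : ℝ) π, HasDerivAt ω (ω' t) t) ∧
  ConcaveOn ℝ (Set.Ioc 0 (π ^ γ⁻¹)) (fun t => ω (t ^ γ)) ∧
  MonotoneOn (fun t => t * ω' t / ω t) (Set.Ioo 0 π)

/-- The generalized Cantor set `E_{(ζ_n)}` (with `ξ k` playing the role of `ζ_{k+1}`). -/
def gCantorSet (ξ : ℕ → ℝ) : Set ℂ :=
  {z | ∃ ε : ℕ → Bool, z = Complex.exp (((2 * π : ℝ) : ℂ) * Complex.I *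
    ((∑' n : ℕ, (if ε n then (1 : ℝ) else 0) * (∏ k ∈ Finset.range n, ξ k) * (1 - ξ n) : ℝ) : ℂ))}

end

/-- The points of the circle parametrized by `cpt` have norm one. -/
lemma cpt_mem_circleT (θ : ℝ) : cpt θ ∈ circleT := by
  simp [circleT, cpt, Complex.norm_exp_ofReal_mul_I]

lemma continuous_cpt : Continuous cpt := by
  unfold cpt
  fun_prop

lemma norm_cpt_sub_cpt (a b : ℝ) : ‖cpt a - cpt b‖ = ‖2 * Real.sin ((a - b) / 2)‖ := by
  have h : cpt a - cpt b = cpt b * (Complex.exp (Complex.I * ((a - b : ℝ) : ℂ)) - 1) := by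
    simp only [cpt, mul_sub, ← Complex.exp_add, mul_one]
    congr 2
    push_cast
    ring
  rw [h, norm_mul, Complex.norm_exp_I_mul_ofReal_sub_one, cpt, Complex.norm_exp_ofReal_mul_I,
    one_mul]

lemma norm_cpt_sub_cpt_le (a b : ℝ) : ‖cpt a - cpt b‖ ≤ |a - b| := by
  rw [norm_cpt_sub_cpt, norm_mul, Real.norm_eq_abs, Real.norm_eq_abs, abs_two]
  have h : |Real.sin ((a - b) / 2)| ≤ |(a - b) / 2| := Real.abs_sin_le_abs
  rw [abs_div, abs_two] at h
  linarith

lemma le_norm_cpt_sub_cpt {a b : ℝ} (hab : |a - b| ≤ π) :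
    2 / π * |a - b| ≤ ‖cpt a - cpt b‖ := by
  rw [norm_cpt_sub_cpt, norm_mul, Real.norm_eq_abs, Real.norm_eq_abs, abs_two]
  have h2 : |(a - b) / 2| = |a - b| / 2 := by rw [abs_div, abs_two]
  have h := Real.mul_abs_le_abs_sin (x := (a - b) / 2) (by rw [h2]; linarith)
  rw [h2] at h
  linarith

/-- The part of the circle at arc distance less than `dist(ζ,E)` from `ζ` lies in the component
of `ζ`. -/
lemma cpt_mem_compArc {E : Set ℂ} {φ θ : ℝ} (h : |θ - φ| < dE E (cpt φ)) :
    cpt θ ∈ compArc E (cpt φ) := by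
  have hpos : 0 < dE E (cpt φ) := (abs_nonneg _).trans_lt h
  have hpre : IsPreconnected (cpt '' Metric.ball φ (dE E (cpt φ))) :=
    (convex_ball φ _).isPreconnected.image _ continuous_cpt.continuousOn
  refine hpre.subset_connectedComponentIn ⟨φ, Metric.mem_ball_self hpos, rfl⟩ ?_
    ⟨θ, by simpa [Metric.mem_ball, Real.dist_eq] using h, rfl⟩
  rintro _ ⟨t, ht, rfl⟩
  refine ⟨cpt_mem_circleT t, fun htE => ?_⟩
  have h1 : dE E (cpt φ) ≤ dist (cpt φ) (cpt t) := Metric.infDist_le_dist_of_mem htE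
  rw [dist_comm, dist_eq_norm] at h1
  rw [Metric.mem_ball, Real.dist_eq] at ht
  linarith [norm_cpt_sub_cpt_le t φ]

lemma dE_cpt_le_add (E : Set ℂ) (a b : ℝ) : dE E (cpt a) ≤ dE E (cpt b) + |a - b| := by
  have h : dE E (cpt a) ≤ dE E (cpt b) + dist (cpt a) (cpt b) := Metric.infDist_le_infDist_add_dist
  rw [dist_eq_norm] at h
  linarith [norm_cpt_sub_cpt_le a b]

lemma continuous_dE_cpt (E : Set ℂ) : Continuous fun θ => dE E (cpt θ) :=
  (Metric.continuous_infDist_pt E).comp continuous_cpt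

/-- On a porous set, truncated negative powers of the normalized distance have integrals over
short arcs comparable to the arc length. Here `h` plays the role of the distance. -/
lemma lintegral_truncated_rpow_le {h : ℝ → ℝ} {c L : ℝ} {N : ℕ}
    (hlip : ∀ a b, h a ≤ h b + |a - b|) (hc : 0 < c) (hN : 2 ≤ N) (hNc : 2 ≤ c * N)
    (hpor : ∀ a l, 0 < l → l ≤ L → ∃ θ ∈ Ioc a (a + l), c * l ≤ h θ) :
    ∃ α > (0 : ℝ), ∃ K > (0 : ℝ), ∀ k : ℕ, ∀ a l, 0 < l → l ≤ L →
      ∫⁻ θ in Ioc a (a + l), ENNReal.ofReal ((max (h θ / l) ((N : ℝ)⁻¹ ^ k)) ^ (-α))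
        ≤ ENNReal.ofReal (K * l) := by
  have hN' : (2 : ℝ) ≤ N := by exact_mod_cast hN
  have hN0 : (0 : ℝ) < N := by linarith
  have hlog : 0 < Real.log N := Real.log_pos (by linarith)
  set α : ℝ := 1 / (N * Real.log N) with hα
  have hα0 : 0 < α := by positivity
  have hpow : (N : ℝ) ^ α = Real.exp (1 / N) := by
    rw [Real.rpow_def_of_pos hN0, hα]
    congr 1
    field_simp
  set q : ℝ := (1 - 1 / N) * (N : ℝ) ^ α with hq
  have hq1 : q < 1 := by
    have h1 : 1 - 1 / (N : ℝ) < Real.exp (-(1 / N)) :=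
      Real.one_sub_lt_exp_neg (by positivity)
    rw [hq, hpow]
    calc _ < Real.exp (-(1 / N)) * Real.exp (1 / N) :=
          mul_lt_mul_of_pos_right h1 (Real.exp_pos _)
      _ = 1 := by rw [← Real.exp_add]; simp
  set B : ℝ := (c / 2) ^ (-α) with hB
  have hB0 : 0 < B := by positivity
  set K : ℝ := max 1 (B / (1 - q)) with hKdef
  have hK1 : 1 ≤ K := le_max_left _ _
  have hKB : B + q * K ≤ K := by
    have : B / (1 - q) ≤ K := le_max_right _ _
    rw [div_le_iff₀ (by linarith)] at this
    linarith
  refine ⟨α, hα0, K, by linarith, fun k => ?_⟩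
  induction k with
  | zero =>
    intro a l hl _
    calc _ ≤ ∫⁻ _ in Ioc a (a + l), 1 := by
          refine lintegral_mono fun θ => ?_
          rw [← ENNReal.ofReal_one]
          refine ENNReal.ofReal_le_ofReal ?_
          exact Real.rpow_le_one_of_one_le_of_nonpos (by simp) (by linarith)
      _ = ENNReal.ofReal l := by simp
      _ ≤ _ := ENNReal.ofReal_le_ofReal (by nlinarith)
  | succ k ih =>
    intro a l hl hlL
    obtain ⟨θ₀, hθ₀, hhθ₀⟩ := hpor a l hl hlL
    set s : ℝ := l / N with hs
    have hs0 : 0 < s := by positivity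
    have hNs : N * s = l := by rw [hs]; field_simp
    have hsl : s ≤ l := by nlinarith
    have hcover : ∀ θ ∈ Ioc a (a + l), ∃ i : Fin N, θ ∈ Ioc (a + i * s) (a + i * s + s) := by
      intro θ hθ
      have hx0 : 0 < (θ - a) / s := div_pos (by linarith [hθ.1]) hs0
      have hceil : 0 < ⌈(θ - a) / s⌉₊ := Nat.ceil_pos.2 hx0
      obtain ⟨j, hj⟩ : ∃ j, ⌈(θ - a) / s⌉₊ = j + 1 := ⟨_, (Nat.succ_pred_eq_of_pos hceil).symm⟩
      have hle : (θ - a) / s ≤ j + 1 := by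
        have := Nat.le_ceil ((θ - a) / s)
        rw [hj] at this
        exact_mod_cast this
      have hlt : (j : ℝ) < (θ - a) / s := Nat.lt_ceil.1 (by omega)
      rw [div_le_iff₀ hs0] at hle
      rw [lt_div_iff₀ hs0] at hlt
      have hjN : j < N := by
        have : (j : ℝ) * s < N * s := by linarith [hθ.2]
        exact_mod_cast lt_of_mul_lt_mul_right this hs0.le
      exact ⟨⟨j, hjN⟩, by simp only; linarith, by simp only; linarith⟩
    obtain ⟨i₀, hi₀⟩ := hcover θ₀ hθ₀
    set F : ℝ → ENNReal :=
      fun θ => ENNReal.ofReal ((max (h θ / l) ((N : ℝ)⁻¹ ^ (k + 1))) ^ (-α)) with hF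
    have hgood : ∫⁻ θ in Ioc (a + i₀ * s) (a + i₀ * s + s), F θ ≤ ENNReal.ofReal (B * s) := by
      calc _ ≤ ∫⁻ _ in Ioc (a + i₀ * s) (a + i₀ * s + s), ENNReal.ofReal B := by
            refine setLIntegral_mono' measurableSet_Ioc fun θ hθ => ENNReal.ofReal_le_ofReal ?_
            have h1 := hlip θ₀ θ
            have h2 : |θ₀ - θ| ≤ s := by
              rw [abs_le]
              constructor <;> linarith [hθ.1, hθ.2, hi₀.1, hi₀.2]
            have h3 : c / 2 ≤ h θ / l := by
              rw [le_div_iff₀ hl]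
              have : 2 * s ≤ c * l := by rw [← hNs]; nlinarith
              linarith
            exact Real.rpow_le_rpow_of_nonpos (by positivity) (h3.trans (le_max_left _ _))
              (by linarith)
        _ = ENNReal.ofReal (B * s) := by
            simp [ENNReal.ofReal_mul hB0.le]
    have hbad : ∀ i : Fin N, ∫⁻ θ in Ioc (a + i * s) (a + i * s + s), F θ ≤
        ENNReal.ofReal ((N : ℝ) ^ α * (K * s)) := by
      intro i
      have heq : ∀ θ, F θ = ENNReal.ofReal ((N : ℝ) ^ α) *
          ENNReal.ofReal ((max (h θ / s) ((N : ℝ)⁻¹ ^ k)) ^ (-α)) := by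
        intro θ
        have h1 : max (h θ / l) ((N : ℝ)⁻¹ ^ (k + 1)) =
            (N : ℝ)⁻¹ * max (h θ / s) ((N : ℝ)⁻¹ ^ k) := by
          rw [mul_max_of_nonneg _ _ (by positivity), pow_succ']
          congr 1
          rw [hs]
          field_simp
        have h2 : 0 ≤ max (h θ / s) ((N : ℝ)⁻¹ ^ k) := le_max_of_le_right (by positivity)
        rw [hF, ← ENNReal.ofReal_mul (by positivity)]
        simp only
        rw [h1, Real.mul_rpow (by positivity) h2, Real.inv_rpow hN0.le, Real.rpow_neg hN0.le,
          inv_inv]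
      simp_rw [heq]
      rw [lintegral_const_mul' _ _ ENNReal.ofReal_ne_top, ENNReal.ofReal_mul (by positivity)]
      gcongr
      exact ih _ s hs0 (hsl.trans hlL)
    calc ∫⁻ θ in Ioc a (a + l), F θ
        ≤ ∫⁻ θ in ⋃ i : Fin N, Ioc (a + i * s) (a + i * s + s), F θ :=
          lintegral_mono_set fun θ hθ => mem_iUnion.2 (hcover θ hθ)
      _ ≤ ∑' i : Fin N, ∫⁻ θ in Ioc (a + i * s) (a + i * s + s), F θ := lintegral_iUnion_le _ _
      _ = ∑ i : Fin N, ∫⁻ θ in Ioc (a + i * s) (a + i * s + s), F θ := tsum_fintype _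
      _ ≤ ENNReal.ofReal (B * s) +
            ∑ i ∈ Finset.univ.erase i₀, ENNReal.ofReal ((N : ℝ) ^ α * (K * s)) := by
          rw [← Finset.add_sum_erase _ _ (Finset.mem_univ i₀)]
          exact add_le_add hgood (Finset.sum_le_sum fun i _ => hbad i)
      _ = ENNReal.ofReal (B * s + (N - 1) * ((N : ℝ) ^ α * (K * s))) := by
          rw [Finset.sum_const, Finset.card_erase_of_mem (Finset.mem_univ _), Finset.card_univ,
            Fintype.card_fin, ← ENNReal.ofReal_nsmul,
            ← ENNReal.ofReal_add (by positivity) (by positivity), nsmul_eq_mul,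
            Nat.cast_sub (by omega), Nat.cast_one]
      _ ≤ ENNReal.ofReal (K * l) := by
          refine ENNReal.ofReal_le_ofReal ?_
          have h1 : (N - 1 : ℝ) * ((N : ℝ) ^ α * (K * s)) = q * K * l := by
            rw [hq, hs]
            field_simp
          have h2 : B * s ≤ B * l := by gcongr
          rw [h1]
          nlinarith

/-- On a porous set, the squared logarithm of the normalized distance has integrals over short
arcs comparable to the arc length. Here `h` plays the role of the distance. -/
lemma lintegral_log_sq_le {h : ℝ → ℝ} {c L : ℝ} (hcont : Continuous h) (h0 : ∀ θ, 0 ≤ h θ)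
    (hlip : ∀ a b, h a ≤ h b + |a - b|) (hc : 0 < c)
    (hpor : ∀ a l, 0 < l → l ≤ L → ∃ θ ∈ Ioc a (a + l), c * l ≤ h θ) :
    ∃ K > (0 : ℝ), ∀ a l, 0 < l → l ≤ L →
      ∫⁻ θ in Ioc a (a + l) ∩ {θ | h θ ≤ l}, ENNReal.ofReal (Real.log (l / h θ) ^ 2)
        ≤ ENNReal.ofReal (K * l) := by
  obtain ⟨M, hM⟩ := exists_nat_ge (2 / c)
  have hNc : 2 ≤ c * ((M + 2 : ℕ) : ℝ) := by
    rw [div_le_iff₀ hc] at hM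
    push_cast
    nlinarith
  obtain ⟨α, hα, K, hK, hbound⟩ :=
    lintegral_truncated_rpow_le (N := M + 2) hlip hc (by omega) hNc hpor
  set N : ℕ := M + 2
  refine ⟨4 / α ^ 2 * K, by positivity, fun a l hl hlL => ?_⟩
  set G : ℕ → ℝ → ENNReal :=
    fun k θ => ENNReal.ofReal ((max (h θ / l) ((N : ℝ)⁻¹ ^ k)) ^ (-α)) with hG
  have hmeas : ∀ k, Measurable (G k) := by
    intro k
    have : Measurable h := hcont.measurable
    simp only [hG]
    fun_prop
  have hN1 : (N : ℝ)⁻¹ < 1 := by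
    apply inv_lt_one_of_one_lt₀
    have : 1 < N := by omega
    exact_mod_cast this
  have hpt : ∀ θ ∈ Ioc a (a + l) ∩ {θ | h θ ≤ l}, ENNReal.ofReal (Real.log (l / h θ) ^ 2) ≤
      ENNReal.ofReal (4 / α ^ 2) * Filter.liminf (fun k => G k θ) Filter.atTop := by
    rintro θ ⟨-, hθ : h θ ≤ l⟩
    rcases (h0 θ).eq_or_lt with hz | hpos
    · simp [← hz]
    have hev : ∀ᶠ k in Filter.atTop, ENNReal.ofReal ((h θ / l) ^ (-α)) ≤ G k θ := by
      have ht := tendsto_pow_atTop_nhds_zero_of_lt_one (r := (N : ℝ)⁻¹) (by positivity) hN1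
      filter_upwards [ht.eventually_lt_const (div_pos hpos hl)] with k hk
      simp only [hG]
      rw [max_eq_left hk.le]
    refine le_trans ?_ (mul_le_mul_right (Filter.le_liminf_of_le (by isBoundedDefault) hev) _)
    rw [← ENNReal.ofReal_mul (by positivity)]
    refine ENNReal.ofReal_le_ofReal ?_
    have hx : 1 ≤ l / h θ := (one_le_div hpos).2 hθ
    have h1 : Real.log (l / h θ) ≤ (l / h θ) ^ (α / 2) / (α / 2) :=
      Real.log_le_rpow_div (by positivity) (by positivity)
    have h2 : (h θ / l) ^ (-α) = ((l / h θ) ^ (α / 2)) ^ 2 := by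
      rw [← Real.rpow_natCast, ← Real.rpow_mul (by positivity), ← inv_div, Real.inv_rpow (by positivity),
        Real.rpow_neg (by positivity), inv_inv]
      congr 1
      push_cast
      ring
    calc Real.log (l / h θ) ^ 2 ≤ ((l / h θ) ^ (α / 2) / (α / 2)) ^ 2 := by
          gcongr
          exact Real.log_nonneg hx
      _ = _ := by rw [h2]; field_simp; norm_num
  have hms : MeasurableSet (Ioc a (a + l) ∩ {θ | h θ ≤ l}) :=
    measurableSet_Ioc.inter (measurableSet_le hcont.measurable measurable_const)
  calc _ ≤ ∫⁻ θ in Ioc a (a + l) ∩ {θ | h θ ≤ l},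
          ENNReal.ofReal (4 / α ^ 2) * Filter.liminf (fun k => G k θ) Filter.atTop :=
        setLIntegral_mono' hms hpt
    _ ≤ ∫⁻ θ in Ioc a (a + l),
          ENNReal.ofReal (4 / α ^ 2) * Filter.liminf (fun k => G k θ) Filter.atTop :=
        lintegral_mono_set inter_subset_left
    _ = ENNReal.ofReal (4 / α ^ 2) *
          ∫⁻ θ in Ioc a (a + l), Filter.liminf (fun k => G k θ) Filter.atTop :=
        lintegral_const_mul' _ _ ENNReal.ofReal_ne_top
    _ ≤ ENNReal.ofReal (4 / α ^ 2) *
          Filter.liminf (fun k => ∫⁻ θ in Ioc a (a + l), G k θ) Filter.atTop := by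
        gcongr
        exact lintegral_liminf_le hmeas
    _ ≤ ENNReal.ofReal (4 / α ^ 2) * ENNReal.ofReal (K * l) := by
        gcongr
        refine (Filter.liminf_le_liminf
          (Filter.Eventually.of_forall fun k => hbound k a l hl hlL)).trans ?_
        rw [Filter.liminf_const]
    _ = _ := by
        rw [← ENNReal.ofReal_mul (by positivity)]
        ring_nf

lemma summable_one_div_abs_add_one_sq : Summable fun m : ℤ => 1 / ((|m| : ℝ) + 1) ^ 2 := by
  have h : Summable fun n : ℕ => 1 / ((n : ℝ) + 1) ^ 2 := by
    have := (summable_nat_add_iff 1).2 (Real.summable_one_div_nat_pow.2 (by norm_num : 1 < 2))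
    simpa using this
  refine Summable.of_nat_of_neg ?_ ?_ <;> simpa using h

/-- Bound for the part of the `𝓛₂` integral over the half-turns around a parameter `φ`. -/
lemma lintegral_log_sq_div_norm_sq_le {E : Set ℂ} {K φ : ℝ} (hK : 0 < K)
    (hd : 0 < dE E (cpt φ))
    (hbound : ∀ a, ∫⁻ θ in Ioc a (a + dE E (cpt φ)) ∩ {θ | dE E (cpt θ) ≤ dE E (cpt φ)},
      ENNReal.ofReal (Real.log (dE E (cpt φ) / dE E (cpt θ)) ^ 2)
        ≤ ENNReal.ofReal (K * dE E (cpt φ))) :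
    ∫⁻ θ in {θ | cpt θ ∈ GammaSet E (cpt φ)} ∩ {θ | |θ - φ| ≤ π},
      ENNReal.ofReal (Real.log (dE E (cpt φ) / dE E (cpt θ)) ^ 2 / ‖cpt φ - cpt θ‖ ^ 2)
      ≤ ENNReal.ofReal
        (9 * π ^ 2 / 4 * K * (∑' m : ℤ, 1 / ((|m| : ℝ) + 1) ^ 2) / dE E (cpt φ)) := by
  set d := dE E (cpt φ) with hd_def
  set J : ℤ → Set ℝ := fun m => {θ | d ≤ |θ - φ| ∧ |θ - φ| ≤ π} ∩
    (Ioc (φ + m * d) (φ + m * d + d) ∩ {θ | dE E (cpt θ) ≤ d}) with hJ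
  have hJm : ∀ m, MeasurableSet (J m) := by
    intro m
    have h1 : Measurable fun θ : ℝ => |θ - φ| := by fun_prop
    exact ((measurableSet_le measurable_const h1).inter (measurableSet_le h1 measurable_const)).inter
      (measurableSet_Ioc.inter
        (measurableSet_le (continuous_dE_cpt E).measurable measurable_const))
  set w : ℤ → ℝ := fun m => 9 * π ^ 2 / 4 / d ^ 2 * (1 / ((|m| : ℝ) + 1) ^ 2) with hw
  have hw0 : ∀ m, 0 ≤ w m := fun m => by positivity
  have hsub : {θ | cpt θ ∈ GammaSet E (cpt φ)} ∩ {θ | |θ - φ| ≤ π} ⊆ ⋃ m, J m := by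
    rintro θ ⟨⟨⟨-, hθ⟩, hle⟩, hπ⟩
    have hdθ : d ≤ |θ - φ| := not_lt.1 fun hlt => hθ (cpt_mem_compArc hlt)
    have h1 := Int.le_ceil ((θ - φ) / d)
    have h2 := Int.ceil_lt_add_one ((θ - φ) / d)
    rw [div_le_iff₀ hd] at h1
    rw [← sub_lt_iff_lt_add, lt_div_iff₀ hd] at h2
    refine mem_iUnion.2 ⟨⌈(θ - φ) / d⌉ - 1, ⟨hdθ, hπ⟩, ⟨?_, ?_⟩, hle⟩
    · push_cast
      linarith
    · push_cast
      linarith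
  have hpiece : ∀ m, ∫⁻ θ in J m,
      ENNReal.ofReal (Real.log (d / dE E (cpt θ)) ^ 2 / ‖cpt φ - cpt θ‖ ^ 2)
        ≤ ENNReal.ofReal (w m * (K * d)) := by
    intro m
    rw [ENNReal.ofReal_mul (hw0 m)]
    calc _ ≤ ∫⁻ θ in J m, ENNReal.ofReal (w m) *
            ENNReal.ofReal (Real.log (d / dE E (cpt θ)) ^ 2) := by
          refine setLIntegral_mono' (hJm m) ?_
          rintro θ ⟨⟨hdθ, hπ⟩, ⟨h1, h2⟩, -⟩
          rw [← ENNReal.ofReal_mul (hw0 m), mul_comm, div_eq_mul_inv]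
          refine ENNReal.ofReal_le_ofReal (mul_le_mul_of_nonneg_left ?_ (sq_nonneg _))
          have h3 := le_norm_cpt_sub_cpt hπ
          rw [norm_sub_rev] at h3
          have hm : (|m| : ℝ) * d ≤ |θ - φ| + d := by
            rw [← abs_of_pos hd, ← abs_mul, abs_of_pos hd, abs_le]
            constructor <;> linarith [neg_abs_le (θ - φ), le_abs_self (θ - φ)]
          have h4 : 2 / π * (((|m| : ℝ) + 1) * d / 3) ≤ ‖cpt φ - cpt θ‖ := by
            refine le_trans ?_ h3
            gcongr
            linarith
          calc (‖cpt φ - cpt θ‖ ^ 2)⁻¹ ≤ ((2 / π * (((|m| : ℝ) + 1) * d / 3)) ^ 2)⁻¹ := by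
                gcongr
            _ = w m := by
                simp only [hw]
                field_simp
                norm_num
      _ = ENNReal.ofReal (w m) * ∫⁻ θ in J m,
            ENNReal.ofReal (Real.log (d / dE E (cpt θ)) ^ 2) :=
          lintegral_const_mul' _ _ ENNReal.ofReal_ne_top
      _ ≤ _ := by
          gcongr
          exact (lintegral_mono_set inter_subset_right).trans (hbound _)
  calc _ ≤ ∫⁻ θ in ⋃ m, J m,
          ENNReal.ofReal (Real.log (d / dE E (cpt θ)) ^ 2 / ‖cpt φ - cpt θ‖ ^ 2) :=
        lintegral_mono_set hsub
    _ ≤ ∑' m, ∫⁻ θ in J m,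
          ENNReal.ofReal (Real.log (d / dE E (cpt θ)) ^ 2 / ‖cpt φ - cpt θ‖ ^ 2) :=
        lintegral_iUnion_le _ _
    _ ≤ ∑' m, ENNReal.ofReal (w m * (K * d)) := ENNReal.tsum_le_tsum hpiece
    _ = ENNReal.ofReal (∑' m, w m * (K * d)) :=
        (ENNReal.ofReal_tsum_of_nonneg (fun m => mul_nonneg (hw0 m) (by positivity))
          ((summable_one_div_abs_add_one_sq.mul_left _).mul_right _)).symm
    _ = _ := by
        rw [tsum_mul_right, tsum_mul_left]
        congr 1
        field_simp

/-- The supremum in the definition of a `𝒦`-set is almost attained. -/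
lemma KSet.exists_le_dE {E : Set ℂ} (hK : KSet E) :
    ∃ c > 0, ∀ a l, 0 < l → l ≤ 2 * π → ∃ θ ∈ Ioc a (a + l), c * l ≤ dE E (cpt θ) := by
  obtain ⟨c, hc, h⟩ := hK
  refine ⟨c / 2, by positivity, fun a l hl hl2 => ?_⟩
  have h1 := h a (a + l) (by linarith) (by linarith)
  have hlt : c / 2 * l < arcSup E a (a + l) := by
    have : 0 < c * l := by positivity
    have h2 : c * (a + l - a) = c * l := by ring
    linarith
  obtain ⟨_, ⟨θ, hθ, rfl⟩, hlt'⟩ :=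
    exists_lt_of_lt_csSup ((nonempty_Ioc.2 (by linarith)).image _) hlt
  exact ⟨θ, hθ, hlt'.le⟩

/-- Every `𝒦`-set is an `𝓛₂`-set. -/
theorem statement7 (E : Set ℂ) (hEc : IsClosed E) (hEsub : E ⊆ circleT)
    (hEz : MeasureZeroOnCircle E) (hK : KSet E) : L2Set E := by
  obtain ⟨c, hc, hpor⟩ := hK.exists_le_dE
  obtain ⟨K, hK0, hbound⟩ := lintegral_log_sq_le (continuous_dE_cpt E)
    (fun _ => Metric.infDist_nonneg) (dE_cpt_le_add E) hc hpor
  have hne : E.Nonempty := by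
    by_contra hemp
    rw [not_nonempty_iff_eq_empty] at hemp
    obtain ⟨θ, -, hθ⟩ := hpor 0 1 one_pos (by linarith [Real.pi_gt_three])
    rw [hemp, dE, Metric.infDist_empty] at hθ
    linarith
  set Z : ℝ := ∑' m : ℤ, 1 / ((|m| : ℝ) + 1) ^ 2 with hZ
  have hZ0 : 0 < Z :=
    summable_one_div_abs_add_one_sq.tsum_pos (fun m => by positivity) 0 (by simp)
  set A : ℝ := 9 * π ^ 2 / 4 * K * Z with hA
  refine ⟨2 * A, by positivity, fun ζ hζ => ?_⟩
  set d := dE E ζ with hd_def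
  have hd : 0 < d := (hEc.notMem_iff_infDist_pos hne).1 hζ.2
  have hd2 : d ≤ 2 * π := by
    obtain ⟨e, he⟩ := hne
    have h1 : d ≤ dist ζ e := Metric.infDist_le_dist_of_mem he
    have h2 : ‖ζ‖ = 1 := by simpa [circleT] using hζ.1
    have h3 : ‖e‖ = 1 := by simpa [circleT] using hEsub he
    have h4 := norm_sub_le ζ e
    rw [dist_eq_norm] at h1
    linarith [Real.pi_gt_three]
  have harc : ∀ φ, cpt φ = ζ → ∫⁻ θ in {θ | cpt θ ∈ GammaSet E ζ} ∩ {θ | |θ - φ| ≤ π},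
      ENNReal.ofReal (Real.log (d / dE E (cpt θ)) ^ 2 / ‖ζ - cpt θ‖ ^ 2)
        ≤ ENNReal.ofReal (A / d) := by
    rintro φ hφ
    have hφd : dE E (cpt φ) = d := by rw [hφ]
    have := lintegral_log_sq_div_norm_sq_le (E := E) (φ := φ) hK0 (by rwa [hφd])
      (by rw [hφd]; exact fun a => hbound a d hd hd2)
    rwa [hφd, hφ] at this
  set φ := Complex.arg ζ with hφ_def
  have hφ : cpt φ = ζ := by
    have h2 : ‖ζ‖ = 1 := by simpa [circleT] using hζ.1
    have := Complex.norm_mul_exp_arg_mul_I ζ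
    rwa [h2, Complex.ofReal_one, one_mul] at this
  have hφ' : cpt (φ + 2 * π) = ζ := by
    rw [← hφ]
    simp only [cpt]
    push_cast
    rw [add_mul, Complex.exp_add, Complex.exp_two_pi_mul_I, mul_one]
  have hsub : {θ ∈ Ioc 0 (2 * π) | cpt θ ∈ GammaSet E ζ} ⊆
      ({θ | cpt θ ∈ GammaSet E ζ} ∩ {θ | |θ - φ| ≤ π}) ∪
        ({θ | cpt θ ∈ GammaSet E ζ} ∩ {θ | |θ - (φ + 2 * π)| ≤ π}) := by
    rintro θ ⟨⟨h0, h1⟩, hθ⟩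
    have h2 : -π < φ := Complex.neg_pi_lt_arg ζ
    have h3 : φ ≤ π := Complex.arg_le_pi ζ
    by_cases h4 : θ - φ ≤ π
    · exact Or.inl ⟨hθ, abs_le.2 ⟨by linarith, h4⟩⟩
    · have h5 : |θ - (φ + 2 * π)| ≤ π := by
        rw [abs_le]
        constructor <;> linarith
      exact Or.inr ⟨hθ, h5⟩
  have hmeas : Measurable fun θ => Real.log (d / dE E (cpt θ)) ^ 2 / ‖ζ - cpt θ‖ ^ 2 := by
    have h1 := (continuous_dE_cpt E).measurable
    have h2 := continuous_cpt.measurable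
    fun_prop
  rw [circIntOn, integral_eq_lintegral_of_nonneg_ae
    (Filter.Eventually.of_forall fun θ => by positivity) hmeas.aestronglyMeasurable]
  refine ENNReal.toReal_le_of_le_ofReal (by positivity) ?_
  calc _ ≤ _ := lintegral_mono_set hsub
    _ ≤ _ := lintegral_union_le _ _ _
    _ ≤ ENNReal.ofReal (A / d) + ENNReal.ofReal (A / d) :=
        add_le_add (harc φ hφ) (harc (φ + 2 * π) hφ')
    _ = _ := by
        rw [← ENNReal.ofReal_add (by positivity) (by positivity)]
        ring_nf
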